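/- Let R be a local complete intersection with maximal ideal 𝔪 and with dim(R) > cod(R). Let M be a maximal Cohen-Macaulay R-module such that M_𝔭 is a free R_𝔭-module for all prime ideals 𝔭 ≠ 𝔪. Then R/J is maximal Cohen-Macaulay for every ideal J of R with JM = 0. -/

import Mathlib

/-!
Write `a = Ann M` and `b = Ann a = (0 : a)`. The theorem holds because `a = 0`: then `J = 0`, and
`R` itself is Cohen-Macaulay (`isMCM_self`).

`R` is Cohen-Macaulay because the maximal ideal of the regular ring `S` is generated by an
`S`-sequence of length `dim S`, and killing an `M`-regular element of the maximal ideal lowers the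
supply of regular sequences by exactly one (`exists_isRegular_quotSMulTop`, from the long exact
sequence of Ext and Rees' theorem). Hence `R` has a regular sequence of length
`n = dim R = dim S - cod R`.

Since `dim R > cod R ≥ 0`, the module `M` has positive depth, so no power of `𝔪` kills it
(`not_pow_le_annihilator`). There are two cases.

* `n = 1`. Then `cod R = 0`, so `𝔪` is principal, and Krull's intersection theorem shows that every
  nonzero ideal contains a power of `𝔪`; thus `a = 0` (`annihilator_eq_bot_of_principal`).
* `n ≥ 2`. Freeness of `M` at each prime `𝔭 ≠ 𝔪` makes `a_𝔭` either zero or the unit ideal, so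
  `a + b` lies in no prime other than `𝔪` and contains some `𝔪 ^ k`. As `a b = 0` and `R` has
  depth at least two, Hartshorne's connectedness argument (`mem_or_mem_of_mul_eq_zero`) puts a
  regular element into `a` or into `b`. In the first case `b = 0` and `𝔪 ^ k ≤ a`, which is
  impossible; in the second case `a = 0` (`annihilator_eq_bot_of_two`).

Depth in the statement is phrased with the derived-functor `Ext`, while Mathlib's Rees theorem uses
`Abelian.Ext`; `extM_subsingleton_iff` compares their vanishing through a projective resolution.
-/

open CategoryTheory TensorProduct

/-- The Ext group `Ext^i_R(M,N)` as a type. -/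
noncomputable def ExtM (R : Type) [CommRing R] (M N : Type) [AddCommGroup M] [Module R M]
    [AddCommGroup N] [Module R N] (i : ℕ) : Type :=
  ((Ext R (ModuleCat R) i).obj (Opposite.op (ModuleCat.of R M))).obj (ModuleCat.of R N)

/-- The Tor group `Tor_i^R(M,N)` as a type. -/
noncomputable def TorM (R : Type) [CommRing R] (M N : Type) [AddCommGroup M] [Module R M]
    [AddCommGroup N] [Module R N] (i : ℕ) : Type :=
  ((Tor (ModuleCat R) i).obj (ModuleCat.of R M)).obj (ModuleCat.of R N)

noncomputable instance (R : Type) [CommRing R] (M N : Type) [AddCommGroup M] [Module R M]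
    [AddCommGroup N] [Module R N] (i : ℕ) : AddCommGroup (TorM R M N i) :=
  inferInstanceAs (AddCommGroup
    (((Tor (ModuleCat R) i).obj (ModuleCat.of R M)).obj (ModuleCat.of R N)))

noncomputable instance (R : Type) [CommRing R] (M N : Type) [AddCommGroup M] [Module R M]
    [AddCommGroup N] [Module R N] (i : ℕ) : Module R (TorM R M N i) :=
  inferInstanceAs (Module R
    (((Tor (ModuleCat R) i).obj (ModuleCat.of R M)).obj (ModuleCat.of R N)))

/-- The depth of a module over a local ring, via Rees' theorem:
`depth M = inf { i | Ext^i(k, M) ≠ 0 }` (so the zero module has depth `⊤`). -/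
noncomputable def depthM (R : Type) [CommRing R] [IsLocalRing R] (M : Type) [AddCommGroup M]
    [Module R M] : ℕ∞ :=
  sInf {i : ℕ∞ | ∃ n : ℕ, i = n ∧ ¬ Subsingleton (ExtM R (IsLocalRing.ResidueField R) M n)}

/-- A maximal Cohen-Macaulay module: a nonzero finitely generated module whose
depth equals the Krull dimension of the ring. -/
def IsMCM (R : Type) [CommRing R] [IsLocalRing R] (M : Type) [AddCommGroup M] [Module R M] :
    Prop :=
  Nontrivial M ∧ Module.Finite R M ∧ (depthM R M : WithBot ℕ∞) = ringKrullDim R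

/-- A regular local ring: a Noetherian local ring whose maximal ideal is generated by a
regular sequence. -/
def IsRegularLocal (S : Type) [CommRing S] [IsLocalRing S] : Prop :=
  IsNoetherianRing S ∧ ∃ xs : List S, RingTheory.Sequence.IsRegular S xs ∧
    Ideal.span {x | x ∈ xs} = IsLocalRing.maximalIdeal S

/-! ### Comparison of the two versions of Ext -/

open RingTheory.Sequence IsLocalRing CategoryTheory Pointwise

lemma linearYonedaObj_exactAt_iff {R : Type} [CommRing R] {X : ModuleCat.{0} R} (P : ProjectiveResolution X)
    (Y : ModuleCat.{0} R) (i j k : ℕ) (hi : (ComplexShape.up ℕ).prev j = i)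
    (hk : (ComplexShape.up ℕ).next j = k) :
    (P.complex.linearYonedaObj R Y).ExactAt j ↔
      ∀ f : P.complex.X j ⟶ Y, P.complex.d k j ≫ f = 0 →
        ∃ g : P.complex.X i ⟶ Y, P.complex.d j i ≫ g = f := by
  rw [HomologicalComplex.exactAt_iff' _ i j k hi hk, ShortComplex.moduleCat_exact_iff]
  rfl

/-- Both versions of `Ext` are the cohomology of `Hom(P, Y)` for a projective resolution `P` of
`X`. In degree `0` both are identified with `Hom(X, Y)`, since `X` is the cokernel of `P₁ ⟶ P₀`. -/
lemma subsingleton_derivedExt_iff {R : Type} [CommRing R] {X : ModuleCat.{0} R} (P : ProjectiveResolution X)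
    (Y : ModuleCat.{0} R) (n : ℕ) :
    Subsingleton (((Ext R (ModuleCat R) n).obj (Opposite.op X)).obj Y) ↔
      Subsingleton (Abelian.Ext X Y n) := by
  have h1 : Subsingleton (((Ext R (ModuleCat R) n).obj (Opposite.op X)).obj Y) ↔
      (P.complex.linearYonedaObj R Y).ExactAt n := by
    rw [HomologicalComplex.exactAt_iff_isZero_homology, ← ModuleCat.isZero_iff_subsingleton]
    exact (P.isoExt n Y).isZero_iff
  rw [h1]
  cases n with
  | zero =>
    rw [linearYonedaObj_exactAt_iff P Y 0 0 1 (by simp) (by simp), Abelian.Ext.addEquiv₀.subsingleton_congr]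
    simp only [HomologicalComplex.shape, ComplexShape.down_Rel, Nat.zero_add, one_ne_zero,
      not_false_eq_true, Limits.zero_comp, exists_const]
    obtain ⟨π, hd, _, hdesc⟩ : ∃ π : P.complex.X 0 ⟶ X, P.complex.d 1 0 ≫ π = 0 ∧ Epi π ∧
        ∀ f : P.complex.X 0 ⟶ Y, P.complex.d 1 0 ≫ f = 0 → ∃ g : X ⟶ Y, π ≫ g = f :=
      ⟨P.π.f 0, P.complex_d_comp_π_f_zero, inferInstanceAs (Epi (P.π.f 0)),
        fun f hf => ⟨P.exact₀.desc f hf, P.exact₀.g_desc f hf⟩⟩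
    constructor
    · intro h
      refine subsingleton_of_forall_eq 0 fun f => (cancel_epi π).1 ?_
      rw [← h (π ≫ f) (by rw [reassoc_of% hd, Limits.zero_comp]), Limits.comp_zero]
    · intro h f hf
      obtain ⟨g, rfl⟩ := hdesc f hf
      rw [Subsingleton.elim g 0, Limits.comp_zero]
  | succ n =>
    rw [linearYonedaObj_exactAt_iff P Y n (n+1) (n+2) (by simp) (by simp)]
    constructor
    · intro h
      refine subsingleton_of_forall_eq 0 fun a => ?_
      obtain ⟨f, hf, rfl⟩ := P.extMk_surjective a (n+2) rfl
      exact (P.extMk_eq_zero_iff f (n+2) rfl hf n rfl).2 (h f hf)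
    · intro h f hf
      exact (P.extMk_eq_zero_iff f (n+2) rfl hf n rfl).1 (Subsingleton.elim _ _)
lemma extM_subsingleton_iff (R : Type) [CommRing R] (M N : Type) [AddCommGroup M] [Module R M]
    [AddCommGroup N] [Module R N] (i : ℕ) :
    Subsingleton (ExtM R M N i) ↔
      Subsingleton (Abelian.Ext (ModuleCat.of R M) (ModuleCat.of R N) i) :=
  subsingleton_derivedExt_iff (ProjectiveResolution.of _) _ i

/-! ### Regular sequences and annihilators over a local ring -/

section
variable {R : Type} [CommRing R] [IsLocalRing R]

lemma mem_maximalIdeal_of_isRegular {M : Type} [AddCommGroup M] [Module R M] {rs : List R}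
    (h : IsRegular M rs) : ∀ r ∈ rs, r ∈ maximalIdeal R := by
  intro r hr
  by_contra hu
  have hu : IsUnit r := by simpa using hu
  refine h.top_ne_smul ?_
  rw [Ideal.eq_top_of_isUnit_mem (Ideal.ofList rs) (Ideal.subset_span hr) hu, Submodule.top_smul]


/-- Rees' theorem for the maximal ideal. Membership of the sequence in the maximal ideal is
automatic, because a regular sequence contains no units. -/
lemma ext_vanishing_iff_exists_isRegular [IsNoetherianRing R] (M : Type) [AddCommGroup M]
    [Module R M] [Module.Finite R M] [Nontrivial M] (n : ℕ) :
    (∀ i < n, Subsingleton (Abelian.Ext (ModuleCat.of R (ResidueField R)) (ModuleCat.of R M) i)) ↔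
      ∃ rs : List R, rs.length = n ∧ IsRegular M rs := by
  have hlt : maximalIdeal R • (⊤ : Submodule R M) < ⊤ :=
    (Submodule.top_ne_ideal_smul_of_le_jacobson_annihilator
      (maximalIdeal_le_jacobson _)).symm.lt_top
  have hfin : Module.Finite R (ResidueField R) := inferInstanceAs (Module.Finite R (R ⧸ maximalIdeal R))
  have hsupp : Module.support R (ResidueField R) = PrimeSpectrum.zeroLocus (maximalIdeal R) := by
    rw [Module.support_eq_zeroLocus]
    exact congrArg (fun I : Ideal R => PrimeSpectrum.zeroLocus (I : Set R))
      (Ideal.annihilator_quotient (I := maximalIdeal R))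
  constructor
  · intro h
    obtain ⟨rs, h1, -, h2⟩ := ModuleCat.exists_isRegular_of_exists_subsingleton_ext
      (maximalIdeal R) n (ModuleCat.of R M) hlt (ModuleCat.of R (ResidueField R)) hsupp h
    exact ⟨rs, h1, h2⟩
  · rintro ⟨rs, rfl, h⟩
    exact ModuleCat.subsingleton_ext_of_exists_isRegular (maximalIdeal R)
      (ModuleCat.of R (ResidueField R)) hsupp.subset (ModuleCat.of R M) hlt rs
      (mem_maximalIdeal_of_isRegular h) h

/-- The depth drops by at most one modulo a regular element. -/
lemma exists_isRegular_quotSMulTop [IsNoetherianRing R] (M : Type) [AddCommGroup M] [Module R M]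
    [Module.Finite R M] {n : ℕ} {x : R} (hx : IsSMulRegular M x) (hxm : x ∈ maximalIdeal R)
    (h : ∃ rs : List R, rs.length = n + 1 ∧ IsRegular M rs) :
    ∃ rs : List R, rs.length = n ∧ IsRegular (QuotSMulTop x M) rs := by
  have : Nontrivial M := h.choose_spec.2.nontrivial
  have := nontrivial_quotSMulTop_of_mem_maximalIdeal (L := M) hxm
  rw [← ext_vanishing_iff_exists_isRegular] at h ⊢
  intro i hi
  have z1 := AddCommGrpCat.isZero_of_iff_subsingleton.mpr (h i (by lia))
  have z2 := AddCommGrpCat.isZero_of_iff_subsingleton.mpr (h (i + 1) (by lia))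
  have hx' : IsSMulRegular (ModuleCat.of R M) x := hx
  exact AddCommGrpCat.subsingleton_of_isZero <| ShortComplex.Exact.isZero_of_both_zeros
    ((Abelian.Ext.covariant_sequence_exact₃' (ModuleCat.of R (ResidueField R))
      hx'.smulShortComplex_shortExact) i (i + 1) rfl)
    (z1.eq_zero_of_src _) (z2.eq_zero_of_tgt _)

/-- The depth drops by at most `xs.length` modulo a regular sequence `xs`. -/
lemma exists_isRegular_quot_ofList [IsNoetherianRing R] (xs : List R) : ∀ (M : Type) [AddCommGroup M] [Module R M]
    [Module.Finite R M] (_ : IsRegular M xs) (n : ℕ)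
    (_ : ∃ rs : List R, rs.length = n + xs.length ∧ IsRegular M rs),
    ∃ rs : List R, rs.length = n ∧ IsRegular (M ⧸ (Ideal.ofList xs • ⊤ : Submodule R M)) rs := by
  induction xs with
  | nil =>
    rintro M _ _ _ - n ⟨rs, h1, h2⟩
    refine ⟨rs, h1, (LinearEquiv.isRegular_congr (Submodule.quotEquivOfEqBot _ ?_).symm rs).1 h2⟩
    rw [Ideal.ofList_nil, Submodule.bot_smul]
  | cons x xs ih =>
    intro M _ _ _ hreg n h
    obtain ⟨hx, hxs⟩ := (isRegular_cons_iff M x xs).1 hreg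
    obtain ⟨rs, h1, h2⟩ := ih (QuotSMulTop x M) hxs n
      (exists_isRegular_quotSMulTop M hx (mem_maximalIdeal_of_isRegular hreg x (by simp)) h)
    exact ⟨rs, h1, (LinearEquiv.isRegular_congr
      (Submodule.quotOfListConsSMulTopEquivQuotSMulTopInner M x xs) rs).2 h2⟩

lemma length_le_ringKrullDim [IsNoetherianRing R] {rs : List R} (h : IsRegular R rs) :
    (rs.length : WithBot ℕ∞) ≤ ringKrullDim R := by
  rw [← ringKrullDim_add_length_eq_ringKrullDim_of_isRegular rs h]
  have : Nontrivial (R ⧸ Ideal.ofList rs) := Ideal.Quotient.nontrivial_iff.2 (by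
    simpa [eq_comm] using h.top_ne_smul)
  exact le_add_of_nonneg_left ringKrullDim_nonneg_of_nontrivial

/-- A nonzero module of positive depth is not killed by a power of the maximal ideal. -/
lemma not_pow_le_annihilator (M : Type) [AddCommGroup M] [Module R M] [Nontrivial M]
    {w : R} (hw : w ∈ maximalIdeal R) (hreg : IsSMulRegular M w) (k : ℕ) :
    ¬ maximalIdeal R ^ k ≤ Module.annihilator R M := by
  intro h
  obtain ⟨m, hm⟩ := exists_ne (0 : M)
  exact hm ((hreg.pow k) (by
    simpa using Module.mem_annihilator.1 (h (Ideal.pow_mem_pow hw k)) m))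

/-- When `𝔪 = (y)`, an element of `𝔪 ^ j` outside `𝔪 ^ (j + 1)` is a unit times `y ^ j`, so by
Krull's intersection theorem a nonzero ideal contains a power of `𝔪`. -/
lemma annihilator_eq_bot_of_principal [IsNoetherianRing R] (M : Type) [AddCommGroup M]
    [Module R M] (h : ∀ k, ¬ maximalIdeal R ^ k ≤ Module.annihilator R M)
    {y : R} (hy : maximalIdeal R = Ideal.span {y}) : Module.annihilator R M = ⊥ := by
  rw [eq_bot_iff, ← Ideal.iInf_pow_eq_bot_of_isLocalRing (maximalIdeal R)
    (Ideal.IsPrime.ne_top inferInstance)]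
  refine le_iInf fun j r hr => ?_
  induction j with
  | zero => simp
  | succ j ih =>
    rw [hy, Ideal.span_singleton_pow] at ih
    obtain ⟨u, rfl⟩ := Ideal.mem_span_singleton'.1 ih
    rw [pow_succ', hy, Ideal.span_singleton_pow, ← hy]
    refine Ideal.mul_mem_mul ?_ (Ideal.mem_span_singleton_self _)
    by_contra hu
    have hu : IsUnit u := by simpa using hu
    refine h j ?_
    rw [hy, Ideal.span_singleton_pow, Ideal.span_singleton_le_iff_mem]
    exact (Ideal.unit_mul_mem_iff_mem _ hu).1 hr

/-- Hartshorne's connectedness argument. If `a b = 0` and a regular sequence `x, y` lies in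
`a + b`, write `x = a₁ + b₁` with `a₁ ∈ a` and `b₁ ∈ b`. Regularity of `y` modulo `x` gives
`a₁ = t x`, and then `t (1 - t) = 0`; in a local ring `t` is `0` or `1`, so `x` lies in `b` or `a`. -/
lemma mem_or_mem_of_mul_eq_zero {a b : Ideal R} (hab : ∀ r ∈ a, ∀ s ∈ b, r * s = 0) {x y : R}
    (hx : IsSMulRegular R x) (hy : ∀ r, y * r ∈ Ideal.span {x} → r ∈ Ideal.span {x})
    (hxa : x ∈ a ⊔ b) (hya : y ∈ a ⊔ b) : x ∈ a ∨ x ∈ b := by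
  obtain ⟨a1, ha1, b1, hb1, h1⟩ := Submodule.mem_sup.1 hxa
  obtain ⟨a2, ha2, b2, hb2, h2⟩ := Submodule.mem_sup.1 hya
  have e1 := hab a1 ha1 b2 hb2
  have e2 := hab a2 ha2 b1 hb1
  obtain ⟨t, ht⟩ := Ideal.mem_span_singleton'.1 (hy a1 (Ideal.mem_span_singleton'.2 ⟨a2, by
    rw [← h1, ← h2]; linear_combination e2 - e1⟩))
  have hb : b1 = x * (1 - t) := by linear_combination h1 + ht
  have hx0 : ∀ r, x * r = 0 → r = 0 := fun r hr => hx (by simpa using hr)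
  have h3 : t * (1 - t) = 0 := hx0 _ (hx0 _ (by
    have := hab a1 ha1 b1 hb1
    rw [← ht, hb] at this
    linear_combination this))
  rcases IsLocalRing.isUnit_or_isUnit_one_sub_self t with hu | hu
  · left
    have : t = 1 := by linear_combination -(hu.mul_right_eq_zero.1 h3)
    subst this
    rw [one_mul] at ht; rwa [ht]
  · right
    have : t = 0 := hu.mul_left_eq_zero.1 h3
    subst this
    rw [sub_zero, mul_one] at hb; rwa [← hb]

/-- If `M_𝔭` is free, it is zero or faithful. In the first case `Ann M ⊄ 𝔭`; in the second
`(Ann M)_𝔭 = 0`, so `Ann (Ann M) ⊄ 𝔭`. -/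
lemma not_annihilator_sup_le_of_free {R : Type} [CommRing R] (M : Type) [AddCommGroup M] [Module R M] [Module.Finite R M]
    [IsNoetherianRing R] (p : Ideal R) [p.IsPrime]
    [Module.Free (Localization.AtPrime p) (LocalizedModule p.primeCompl M)] :
    ¬ (Module.annihilator R M ⊔ Module.annihilator R (Module.annihilator R M) ≤ p) := by
  intro hle
  have h1 := le_sup_left.trans hle
  have h2 := le_sup_right.trans hle
  have hs : (⟨p, inferInstance⟩ : PrimeSpectrum R) ∈ Module.support R M := by
    rw [Module.mem_support_iff_of_finite]; exact h1
  have hs2 : (⟨p, inferInstance⟩ : PrimeSpectrum R) ∈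
      Module.support R (Module.annihilator R M) := by
    rw [Module.mem_support_iff_of_finite]; exact h2
  rw [Module.mem_support_iff] at hs
  rw [Module.mem_support_iff'] at hs2
  obtain ⟨⟨m, hm⟩, hm2⟩ := hs2
  have : ∀ z : LocalizedModule p.primeCompl M,
      algebraMap R (Localization.AtPrime p) m • z = 0 := by
    intro z
    induction z using LocalizedModule.induction_on with
    | h z s =>
      rw [algebraMap_smul, LocalizedModule.smul'_mk, Module.mem_annihilator.1 hm,
        LocalizedModule.zero_mk]
  have h0 : algebraMap R (Localization.AtPrime p) m = 0 := by
    exact FaithfulSMul.eq_of_smul_eq_smul (α := LocalizedModule p.primeCompl M) (fun z => by rw [this, zero_smul])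
  rw [IsLocalization.map_eq_zero_iff p.primeCompl] at h0
  obtain ⟨⟨s, hs⟩, h0⟩ := h0
  exact hm2 s hs (Subtype.ext h0)

lemma exists_maximalIdeal_pow_le [IsNoetherianRing R] (I : Ideal R)
    (h : ∀ p : Ideal R, p.IsPrime → p ≠ maximalIdeal R → ¬ I ≤ p) :
    ∃ k, k ≠ 0 ∧ maximalIdeal R ^ k ≤ I := by
  suffices h : ∃ k, maximalIdeal R ^ k ≤ I by
    obtain ⟨k, hk⟩ := h
    exact ⟨k + 1, k.succ_ne_zero, (Ideal.pow_le_pow_right k.le_succ).trans hk⟩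
  apply Ideal.exists_pow_le_of_le_radical_of_fg _ (IsNoetherian.noetherian _)
  rw [Ideal.radical_eq_sInf]
  refine le_sInf fun p hp => ?_
  by_contra hh
  exact h p hp.2 (fun e => hh e.ge) hp.1

/-- The case of depth at least two: a finite module that is free on the punctured spectrum and is
not killed by a power of `𝔪` is faithful. -/
lemma annihilator_eq_bot_of_two [IsNoetherianRing R] (M : Type) [AddCommGroup M]
    [Module R M] [Module.Finite R M] (h : ∀ k, ¬ maximalIdeal R ^ k ≤ Module.annihilator R M)
    (hfree : ∀ (p : Ideal R) (_ : p.IsPrime), p ≠ IsLocalRing.maximalIdeal R →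
      Module.Free (Localization.AtPrime p) (LocalizedModule p.primeCompl M))
    {n : ℕ} (hR : ∃ rs : List R, rs.length = n + 2 ∧ IsRegular R rs) :
    Module.annihilator R M = ⊥ := by
  set a := Module.annihilator R M with ha
  set b := Module.annihilator R a with hb
  obtain ⟨k, hk0, hk⟩ := exists_maximalIdeal_pow_le (a ⊔ b) (fun p hp hpm => by
    have := hfree p hp hpm
    exact not_annihilator_sup_le_of_free M p)
  have hab : ∀ r ∈ a, ∀ s ∈ b, r * s = 0 := fun r hr s hs => by
    have := congrArg Subtype.val (Module.mem_annihilator.1 hs ⟨r, hr⟩)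
    rw [mul_comm]; exact this
  obtain ⟨x, xm, hx⟩ : ∃ x ∈ maximalIdeal R, IsSMulRegular R x := by
    obtain ⟨_ | ⟨x, rs⟩, h1, h2⟩ := hR
    · simp at h1
    · exact ⟨x, mem_maximalIdeal_of_isRegular h2 x (by simp), ((isRegular_cons_iff _ _ _).1 h2).1⟩
  -- `x ^ k` is regular, so a second regular element is chosen modulo `x ^ k` rather than `x`.
  obtain ⟨z, zm, hz⟩ : ∃ z ∈ maximalIdeal R, IsSMulRegular (QuotSMulTop (x ^ k) R) z := by
    obtain ⟨_ | ⟨z, rs⟩, h1, h2⟩ := exists_isRegular_quotSMulTop R (hx.pow k) (Ideal.pow_mem_of_mem _ xm k (by lia)) hR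
    · simp at h1
    · exact ⟨z, mem_maximalIdeal_of_isRegular h2 z (by simp), ((isRegular_cons_iff _ _ _).1 h2).1⟩
  have hzk : ∀ r, z ^ k * r ∈ Ideal.span {x ^ k} → r ∈ Ideal.span {x ^ k} := by
    have e : Ideal.span {x ^ k} = x ^ k • (⊤ : Ideal R) := by
      simp [← Submodule.ideal_span_singleton_smul]
    rw [e]
    intro r hr
    rw [← Submodule.Quotient.mk_eq_zero] at hr ⊢
    exact (hz.pow k) (hr.trans (smul_zero _).symm)
  have hx0 : ∀ r, x ^ k * r = 0 → r = 0 := fun r hr => (hx.pow k) (by simpa using hr)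
  rcases mem_or_mem_of_mul_eq_zero hab (hx.pow k) hzk (hk (Ideal.pow_mem_pow xm k))
    (hk (Ideal.pow_mem_pow zm k)) with hxa | hxb
  · have : b = ⊥ := eq_bot_iff.2 fun s hs => hx0 s (hab _ hxa s hs)
    rw [this, sup_bot_eq] at hk
    exact absurd hk (h k)
  · exact eq_bot_iff.2 fun r hr => hx0 r (by rw [mul_comm]; exact hab r hr _ hxb)

end

/-! ### Depth and Krull dimension -/

lemma depthM_eq (R : Type) [CommRing R] [IsLocalRing R] [IsNoetherianRing R] (M : Type)
    [AddCommGroup M] [Module R M] [Module.Finite R M] [Nontrivial M] {n : ℕ}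
    (h : ∃ rs : List R, rs.length = n ∧ IsRegular M rs)
    (h' : ¬ ∃ rs : List R, rs.length = n + 1 ∧ IsRegular M rs) : depthM R M = n := by
  rw [← ext_vanishing_iff_exists_isRegular] at h h'
  push Not at h'
  obtain ⟨i, hi, hne⟩ := h'
  obtain rfl : i = n := by
    by_contra hin
    exact not_subsingleton_iff_nontrivial.2 hne (h i (by lia))
  refine le_antisymm (sInf_le ⟨i, rfl, ?_⟩) (le_sInf ?_)
  · rwa [extM_subsingleton_iff, not_subsingleton_iff_nontrivial]
  · rintro _ ⟨j, rfl, hj⟩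
    rw [extM_subsingleton_iff] at hj
    exact Nat.cast_le.2 (not_lt.1 fun hji => hj (h j hji))

lemma exists_isRegular_of_le_depthM (R : Type) [CommRing R] [IsLocalRing R] [IsNoetherianRing R]
    (M : Type) [AddCommGroup M] [Module R M] [Module.Finite R M] [Nontrivial M] {n : ℕ}
    (h : n ≤ depthM R M) : ∃ rs : List R, rs.length = n ∧ IsRegular M rs := by
  rw [← ext_vanishing_iff_exists_isRegular]
  intro i hi
  rw [← extM_subsingleton_iff]
  by_contra hne
  exact absurd (h.trans (sInf_le ⟨i, rfl, hne⟩)) (not_le.2 (Nat.cast_lt.2 hi))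

/-- A Noetherian local ring with a regular sequence of length `dim R` is maximal Cohen-Macaulay
over itself; `R` is written as `R ⧸ ⊥`. -/
lemma isMCM_self {R : Type} [CommRing R] [IsLocalRing R] [IsNoetherianRing R] {n : ℕ}
    (hdim : ringKrullDim R = n) (hR : ∃ rs : List R, rs.length = n ∧ IsRegular R rs) :
    IsMCM R (R ⧸ (⊥ : Ideal R)) := by
  have e : (R ⧸ (⊥ : Ideal R)) ≃ₗ[R] R := Submodule.quotEquivOfEqBot ⊥ rfl
  have hnt : Nontrivial (R ⧸ (⊥ : Ideal R)) := e.toEquiv.nontrivial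
  refine ⟨hnt, inferInstance, ?_⟩
  obtain ⟨rs, h1, h2⟩ := hR
  rw [hdim, depthM_eq R _ ⟨rs, h1, (e.isRegular_congr rs).2 h2⟩]
  · rfl
  · rintro ⟨ts, h3, h4⟩
    have := length_le_ringKrullDim ((e.isRegular_congr ts).1 h4)
    rw [hdim, h3] at this
    have := Nat.cast_le.1 (WithBot.coe_le_coe.1 this)
    lia

/-- A local ring whose maximal ideal is generated by a regular sequence has dimension the length
of that sequence. -/
lemma ringKrullDim_of_isRegular_maximal {S : Type} [CommRing S] [IsLocalRing S]
    [IsNoetherianRing S] {ys : List S} (h : IsRegular S ys)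
    (hm : Ideal.ofList ys = maximalIdeal S) : ringKrullDim S = ys.length := by
  rw [← ringKrullDim_add_length_eq_ringKrullDim_of_isRegular ys h, hm,
    ringKrullDim_eq_zero_of_isField
      ((Ideal.Quotient.maximal_ideal_iff_isField_quotient _).1 inferInstance), zero_add]

/-- Let `R` be a local complete intersection with `dim R > cod R`. If `M` is
a maximal Cohen-Macaulay `R`-module such that `M_𝔭` is free over `R_𝔭` for all primes
`𝔭 ≠ 𝔪`, then `R/J` is maximal Cohen-Macaulay for every ideal `J` with `JM = 0`. -/
theorem stmt5 (R : Type) [CommRing R] [IsLocalRing R]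
    (S : Type) [CommRing S] [IsLocalRing S] (hS : IsRegularLocal S)
    (xs : List S) (hreg : RingTheory.Sequence.IsRegular S xs)
    (hx2 : ∀ x ∈ xs, x ∈ (IsLocalRing.maximalIdeal S) ^ 2)
    (e : (S ⧸ Ideal.span {x | x ∈ xs}) ≃+* R)
    (hdim : (xs.length : WithBot ℕ∞) < ringKrullDim R)
    (M : Type) [AddCommGroup M] [Module R M] [Module.Finite R M]
    (hMCM : IsMCM R M)
    (hfree : ∀ (p : Ideal R) (_ : p.IsPrime), p ≠ IsLocalRing.maximalIdeal R →
      Module.Free (Localization.AtPrime p) (LocalizedModule p.primeCompl M))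
    (J : Ideal R) (hJ : ∀ x ∈ J, ∀ m : M, x • m = 0) :
    IsMCM R (R ⧸ J) := by
  obtain ⟨hSN, ys, hys, hym⟩ := hS
  have hdS := ringKrullDim_of_isRegular_maximal hys hym
  have hRN : IsNoetherianRing R := isNoetherianRing_of_ringEquiv _ e
  let f : S →+* R := (e : (S ⧸ Ideal.span {x | x ∈ xs}) →+* R).comp (Ideal.Quotient.mk _)
  have hf : Function.Surjective f := e.surjective.comp Ideal.Quotient.mk_surjective
  have hdR : ringKrullDim R + xs.length = ys.length := by
    rw [← ringKrullDim_eq_of_ringEquiv e, ← hdS]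
    exact ringKrullDim_add_length_eq_ringKrullDim_of_isRegular xs hreg
  obtain ⟨n, hn⟩ : ∃ n : ℕ, ringKrullDim R = n := by
    have h1 : ringKrullDim R ≤ ys.length := by
      rw [← hdR]
      exact le_add_of_nonneg_right (by positivity)
    generalize ringKrullDim R = d at *
    induction d with
    | bot => simp at hdim
    | coe d =>
      induction d with
      | top => exact absurd (WithBot.coe_le_coe.1 h1) (by simp)
      | coe d => exact ⟨d, rfl⟩
  rw [hn] at hdR hdim
  have hlen : ys.length = n + xs.length := by exact_mod_cast hdR.symm
  have hlt : xs.length < n := by exact_mod_cast hdim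
  -- The regular sequence of `S` descends to `S ⧸ (xs)` and is transported along `e`.
  have hR : ∃ rs : List R, rs.length = n ∧ IsRegular R rs := by
    obtain ⟨rs, h1, h2⟩ := exists_isRegular_quot_ofList xs S hreg n ⟨ys, hlen, hys⟩
    refine ⟨rs.map f, by simpa using h1, ?_⟩
    have heq : (Ideal.ofList xs • ⊤ : Submodule S S) = Ideal.span {x | x ∈ xs} := by
      simp [Ideal.ofList]
    let g : (S ⧸ (Ideal.ofList xs • ⊤ : Submodule S S)) ≃+ R :=
      (Submodule.quotEquivOfEq _ _ heq).toAddEquiv.trans e.toAddEquiv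
    refine (AddEquiv.isRegular_congr (e := g) (List.forall₂_map_right_iff.2
      (List.forall₂_same.2 fun r _ x => ?_))).1 h2
    obtain ⟨x, rfl⟩ := Submodule.Quotient.mk_surjective _ x
    exact map_mul f r x
  obtain ⟨hMnt, -, hMd⟩ := hMCM
  have hMd' : depthM R M = n := by
    rw [hn] at hMd
    exact WithBot.coe_injective hMd
  have hpow : ∀ k, ¬ maximalIdeal R ^ k ≤ Module.annihilator R M := by
    obtain ⟨_ | ⟨w, rs⟩, h1, h2⟩ := exists_isRegular_of_le_depthM R M hMd'.ge
    · simp at h1; lia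
    · exact not_pow_le_annihilator M (mem_maximalIdeal_of_isRegular h2 w (by simp))
        ((isRegular_cons_iff _ _ _).1 h2).1
  have hann : Module.annihilator R M = ⊥ := by
    obtain rfl | ⟨k, rfl⟩ : n = 1 ∨ ∃ k, n = k + 2 := by
      rcases n with _ | _ | k
      · lia
      · exact .inl rfl
      · exact .inr ⟨k, rfl⟩
    · obtain ⟨y, rfl⟩ := List.length_eq_one_iff.1 (show ys.length = 1 by lia)
      refine annihilator_eq_bot_of_principal M hpow (y := f y) ?_
      rw [← map_maximalIdeal_of_surjective f hf, ← hym]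
      simp [Ideal.map_span]
    · exact annihilator_eq_bot_of_two M hpow hfree hR
  obtain rfl : J = ⊥ := eq_bot_iff.2 (hann ▸ fun x hx => Module.mem_annihilator.2 (hJ x hx))
  exact isMCM_self hn hR
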